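/- Let s ≥ 1 be an integer, let C be a type, and let τ : Fin (3s+1) × Fin (s+1) → C be a function such that τ (k, 0) ≠ τ (k, Fin.last s) for every k : Fin (3s+1). Then there exist an index i with 0 ≤ i < s and four pairwise distinct indices k₁, k₂, k₃, k₄ : Fin (3s+1) such that τ (k_t, i) ≠ τ (k_t, i+1) for each t ∈ {1, 2, 3, 4}. -/

import Mathlib

/-! The colors along each row start and end differently, so every row changes color at some step.
Choosing one such step per row maps more than `s * n` rows to `s` steps, so some step is chosen by
more than `n` rows; the four rows of the theorem are the case `n = 3`. -/

theorem exists_castSucc_ne_succ {s : ℕ} {C : Type*} (f : Fin (s + 1) → C)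
    (hf : f 0 ≠ f (Fin.last s)) : ∃ i : Fin s, f i.castSucc ≠ f i.succ := by
  contrapose! hf
  exact Fin.induction (motive := fun j ↦ f 0 = f j) rfl (fun i hi ↦ hi.trans (hf i)) (Fin.last s)

theorem pigeonhole_color_change_general {ι C : Type*} [Fintype ι] [DecidableEq C] {s n : ℕ}
    (hn : s * n < Fintype.card ι) (τ : ι × Fin (s + 1) → C)
    (hτ : ∀ k, τ (k, 0) ≠ τ (k, Fin.last s)) :
    ∃ i : Fin s, n < Finset.card {k | τ (k, i.castSucc) ≠ τ (k, i.succ)} := by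
  choose step hstep using fun k ↦ exists_castSucc_ne_succ (fun j ↦ τ (k, j)) (hτ k)
  obtain ⟨i, hi⟩ := Fintype.exists_lt_card_fiber_of_mul_lt_card (n := n) step
    (by rwa [Fintype.card_fin])
  have change_of_step_eq (k : ι) (hk : step k = i) : τ (k, i.castSucc) ≠ τ (k, i.succ) :=
    hk ▸ hstep k
  exact ⟨i, hi.trans_le <| Finset.card_le_card <|
    Finset.monotone_filter_right _ fun k _ ↦ change_of_step_eq k⟩

/-- Walk-along-the-path plus pigeonhole: if `τ` colors the grid
`Fin (3s+1) × Fin (s+1)` so that the two endpoints of each row get different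
colors, then some step `i ↦ i+1` of the path witnesses a color change in at
least four distinct rows. -/
theorem pigeonhole_color_change (s : ℕ) (hs : 1 ≤ s) {C : Type*}
    (τ : Fin (3 * s + 1) × Fin (s + 1) → C)
    (hτ : ∀ k : Fin (3 * s + 1), τ (k, 0) ≠ τ (k, Fin.last s)) :
    ∃ i : Fin s, ∃ k₁ k₂ k₃ k₄ : Fin (3 * s + 1),
      k₁ ≠ k₂ ∧ k₁ ≠ k₃ ∧ k₁ ≠ k₄ ∧ k₂ ≠ k₃ ∧ k₂ ≠ k₄ ∧ k₃ ≠ k₄ ∧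
      τ (k₁, i.castSucc) ≠ τ (k₁, i.succ) ∧
      τ (k₂, i.castSucc) ≠ τ (k₂, i.succ) ∧
      τ (k₃, i.castSucc) ≠ τ (k₃, i.succ) ∧
      τ (k₄, i.castSucc) ≠ τ (k₄, i.succ) := by
  classical
  obtain ⟨i, hi⟩ := pigeonhole_color_change_general (n := 3) (by simp [mul_comm]) τ hτ
  obtain ⟨k₁, k₂, k₃, k₄, h⟩ := Finset.three_lt_card_iff.mp hi
  exact ⟨i, k₁, k₂, k₃, k₄, by simp_all⟩
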